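/- Let n ≥ 1 and ℓ ≤ n, let H_B and H_{R₂} be finite-dimensional, and let ψ ∈ H_A ⊗ H_B ⊗ (H_{R₁} ⊗ H_{R₂}) with H_{R₁} = ℂ^V be a unit vector of the form ψ = ∑_{z∈V} √p_z |z⟩_A ⊗ Ψ_z, where p is a probability distribution on V and Ψ_z ∈ H_B ⊗ H_{R₁} ⊗ H_{R₂} is the image of |φ_z⟩ ⊗ |z⟩ under the canonical isomorphism (H_B ⊗ H_{R₂}) ⊗ H_{R₁} ≅ H_B ⊗ H_{R₁} ⊗ H_{R₂}, for unit vectors |φ_z⟩ ∈ H_B ⊗ H_{R₂} (this expresses the condition H(Z^A|R) = 0, with R = R₁R₂). Let g : V → (ZMod 2)^ℓ be a surjective linear map and 0 ≤ ε ≤ 1, and suppose the hashed X-key is ε-secure against R: D(σ_g^{KR}, 2^{−ℓ} 1_K ⊗ ψ^R) ≤ ε. Then for every surjective linear map f⊥ : V → (ZMod 2)^{n−ℓ} with ker f⊥ = range gᵀ, there exists a family of POVMs (Λ^c_z)_{z∈V} on H_B, one for each c ∈ (ZMod 2)^{n−ℓ}, such that ∑_{z∈V} ⟨ψ| (|z⟩⟨z|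 ⊗ Λ^{f⊥(z)}_z ⊗ 1_R) |ψ⟩ ≥ 1 − √(2ε). -/

import Mathlib

open Matrix BigOperators Finset
open scoped Classical ComplexOrder

noncomputable section

/-- The positive semidefinite square root of a matrix (zero if the matrix is not PSD). -/
def psdSqrt {ι : Type*} [Fintype ι] [DecidableEq ι] (M : Matrix ι ι ℂ) : Matrix ι ι ℂ :=
  if h : M.PosSemidef then
    (h.1.eigenvectorUnitary : Matrix ι ι ℂ) *
      diagonal (fun i => ((Real.sqrt (h.1.eigenvalues i) : ℝ) : ℂ)) *
      (star h.1.eigenvectorUnitary : Matrix ι ι ℂ)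
  else 0

/-- Trace norm ‖M‖₁ = Tr √(M†M). -/
def traceNorm {ι : Type*} [Fintype ι] [DecidableEq ι] (M : Matrix ι ι ℂ) : ℝ :=
  ((psdSqrt (Mᴴ * M)).trace).re

/-- Trace distance D(ρ,σ) = ‖ρ−σ‖₁/2. -/
def traceDist {ι : Type*} [Fintype ι] [DecidableEq ι] (ρ σ : Matrix ι ι ℂ) : ℝ :=
  traceNorm (ρ - σ) / 2

/-- The adjoint fᵀ of a linear map f : (ZMod 2)^n → (ZMod 2)^m with respect to the
standard bilinear forms ⟨u,v⟩ = ∑ i, u i * v i, i.e. the map with ⟨fᵀc, v⟩ = ⟨c, f v⟩. -/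
def adjLin {n m : ℕ}
    (f : ((Fin n → ZMod 2)) →ₗ[ZMod 2] (Fin m → ZMod 2)) :
    ((Fin m → ZMod 2)) →ₗ[ZMod 2] (Fin n → ZMod 2) :=
  Matrix.toLin' (LinearMap.toMatrix' f)ᵀ

/-- Conjugate (X) basis vector of n qubits: |x̃⟩_z = (−1)^{⟨x,z⟩} / 2^{n/2}. -/
def xVecV (n : ℕ) (x z : Fin n → ZMod 2) : ℂ :=
  (-1 : ℂ) ^ ((∑ i, x i * z i : ZMod 2)).val / (Real.sqrt (2 ^ n) : ℂ)

/-- Component of (⟨x̃|⊗1_{BR})|ψ⟩. -/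
def condVecXV {n : ℕ} {β r : Type*} [Fintype β] [Fintype r]
    (ψ : (Fin n → ZMod 2) × β × r → ℂ) (x : Fin n → ZMod 2) (p : β × r) : ℂ :=
  ∑ z, (starRingEnd ℂ) (xVecV n x z) * ψ (z, p.1, p.2)

/-- Unnormalized conditional state ϑ_x^R = Tr_B[(⟨x̃|⊗1)|ψ⟩⟨ψ|(|x̃⟩⊗1)]. -/
def thetaRV {n : ℕ} {β r : Type*} [Fintype β] [Fintype r]
    (ψ : (Fin n → ZMod 2) × β × r → ℂ) (x : Fin n → ZMod 2) : Matrix r r ℂ :=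
  Matrix.of fun s s' => ∑ b, condVecXV ψ x (b, s) * (starRingEnd ℂ) (condVecXV ψ x (b, s'))

/-- Reduced state ψ^R = Tr_{AB}|ψ⟩⟨ψ|. -/
def reducedR {α β r : Type*} [Fintype α] [Fintype β] [Fintype r]
    (ψ : α × β × r → ℂ) : Matrix r r ℂ :=
  Matrix.of fun s s' => ∑ z, ∑ b, ψ (z, b, s) * (starRingEnd ℂ) (ψ (z, b, s'))

/-- The hashed X-key state σ_g^{KR} = ∑_k |k⟩⟨k| ⊗ ∑_{x : g x = k} ϑ_x^R. -/
def keyState {n ℓ : ℕ} {β r : Type*} [Fintype β] [Fintype r]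
    (ψ : (Fin n → ZMod 2) × β × r → ℂ)
    (g : ((Fin n → ZMod 2)) →ₗ[ZMod 2] (Fin ℓ → ZMod 2)) :
    Matrix ((Fin ℓ → ZMod 2) × r) ((Fin ℓ → ZMod 2) × r) ℂ :=
  Matrix.of fun p q =>
    if p.1 = q.1 then ∑ x ∈ Finset.univ.filter (fun x => g x = p.1), thetaRV ψ x p.2 q.2
    else 0

/-- The ideal key state 2^{−ℓ} 1_K ⊗ ψ^R on ℓ key bits. -/
def idealKeyV (ℓ : ℕ) {n : ℕ} {β r : Type*} [Fintype β] [Fintype r]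
    (ψ : (Fin n → ZMod 2) × β × r → ℂ) :
    Matrix ((Fin ℓ → ZMod 2) × r) ((Fin ℓ → ZMod 2) × r) ℂ :=
  Matrix.of fun p q => (if p.1 = q.1 then ((2 : ℂ) ^ ℓ)⁻¹ else 0) * reducedR ψ p.2 q.2

end

/-!
Write the amplitudes of `ψ` as a matrix `m` with rows indexed by `R` and columns by `B`. Summing the
phases `(-1) ^ ⟨x, z + z'⟩` over a fibre of `g` keeps exactly the coherences with `z + z' ∈ range gᵀ
= ker f⊥`. So, up to a diagonal unitary, the hashed key state is `2^{-ℓ} 1 ⊗ σ`, where `σ` is the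
pinching of `m * mᴴ` along `f⊥`, while `ψ^R` is its pinching `τ` along `z`: security of the key says
that `‖σ - τ‖₁ ≤ 2 ε`. A pretty good measurement of `B` given `f⊥ z` finds `z` with probability at
least the weight of the `z`-diagonal blocks of `√σ`. As `√τ` is block diagonal, the off-diagonal
weight is at most `Tr (√σ - √τ) ^ 2`, which is at most `‖σ - τ‖₁` by the Powers–Størmer inequality.
The success probability is therefore at least `1 - 2 ε`, hence at least `1 - √(2 ε)`.
-/

section TraceInequalities

open scoped MatrixOrder Kronecker

variable {𝕜 ι κ : Type*} [RCLike 𝕜] [Fintype ι] [Fintype κ]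

lemma trace_mul_nonneg {A B : Matrix ι ι 𝕜} (hA : 0 ≤ A) (hB : 0 ≤ B) : 0 ≤ (A * B).trace := by
  obtain ⟨C, rfl⟩ := CStarAlgebra.nonneg_iff_eq_star_mul_self.1 hA
  rw [star_eq_conjTranspose, Matrix.mul_assoc, Matrix.trace_mul_comm]
  exact (hB.posSemidef.mul_mul_conjTranspose_same C).trace_nonneg

lemma re_trace_mul_conjTranspose_self (A : Matrix ι κ ℂ) :
    (A * Aᴴ).trace.re = ∑ i, ∑ j, ‖A i j‖ ^ 2 := by
  simp only [Matrix.trace, diag_apply, Matrix.mul_apply, conjTranspose_apply, Complex.star_def,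
    Complex.mul_conj, Complex.normSq_eq_norm_sq, Complex.re_sum, Complex.ofReal_re]

lemma trace_mul_le_trace_abs [DecidableEq ι] {A E : Matrix ι ι 𝕜} (hA : A.IsHermitian)
    (hE : -1 ≤ E) (hE' : E ≤ 1) : (E * A).trace ≤ (CFC.abs A).trace := by
  have hsub : 0 ≤ CFC.abs A - A := by
    rw [CFC.abs_sub_self A hA]
    exact nsmul_nonneg (CFC.negPart_nonneg A) 2
  have hadd : 0 ≤ CFC.abs A + A := by
    rw [CFC.abs_add_self A hA]
    exact nsmul_nonneg (CFC.posPart_nonneg A) 2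
  have htwo : (2 : 𝕜) * ((CFC.abs A).trace - (E * A).trace)
      = ((E - -1) * (CFC.abs A - A)).trace + ((1 - E) * (CFC.abs A + A)).trace := by
    simp only [Matrix.sub_mul, Matrix.mul_sub, Matrix.mul_add, Matrix.neg_mul, Matrix.one_mul,
      Matrix.trace_add, Matrix.trace_sub, Matrix.trace_neg]
    ring
  have hnonneg : 0 ≤ (2 : 𝕜) * ((CFC.abs A).trace - (E * A).trace) := by
    rw [htwo]
    exact add_nonneg (trace_mul_nonneg (sub_nonneg.2 hE) hsub)
      (trace_mul_nonneg (sub_nonneg.2 hE') hadd)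
  exact sub_nonneg.1 (le_of_mul_le_mul_left (by rwa [mul_zero]) (two_pos : (0 : 𝕜) < 2))

lemma exists_sign_mul_eq_abs [DecidableEq ι] {A : Matrix ι ι 𝕜} (hA : A.IsHermitian) :
    ∃ E : Matrix ι ι 𝕜, -1 ≤ E ∧ E ≤ 1 ∧ E * A = CFC.abs A ∧ A * E = CFC.abs A := by
  set sgn : ℝ → ℝ := fun x => (SignType.sign x : ℝ)
  have hsgn (x : ℝ) : -1 ≤ sgn x ∧ sgn x ≤ 1 := by
    rcases h : SignType.sign x <;> simp [sgn, h]
  have hcont (f : ℝ → ℝ) : ContinuousOn f (spectrum ℝ A) := A.finite_real_spectrum.continuousOn f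
  have hmul : cfc sgn A * A = CFC.abs A := by
    nth_rw 2 [← cfc_id ℝ A]
    rw [← cfc_mul _ _ A (hcont _) (hcont _), CFC.abs_eq_cfc_norm A]
    exact cfc_congr fun x _ => sign_mul_self x
  refine ⟨cfc sgn A, ?_, ?_, hmul, ?_⟩
  · simpa using algebraMap_le_cfc sgn (-1) A (fun x _ => (hsgn x).1) (hcont _)
  · simpa using cfc_le_algebraMap sgn 1 A (fun x _ => (hsgn x).2) (hcont _)
  · rw [← hmul]
    exact ((Commute.refl A).cfc_real sgn).symm

/-- **Powers–Størmer inequality.** -/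
lemma trace_sub_mul_sub_le_trace_abs {S T : Matrix ι ι 𝕜} (hS : 0 ≤ S) (hT : 0 ≤ T) :
    ((S - T) * (S - T)).trace ≤ (CFC.abs (S * S - T * T)).trace := by
  have hSh : S.IsHermitian := hS.posSemidef.1
  have hTh : T.IsHermitian := hT.posSemidef.1
  have hD : (S - T).IsHermitian := hSh.sub hTh
  obtain ⟨E, hE, hE', hEm, hmE⟩ := exists_sign_mul_eq_abs hD
  have hherm : (S * S - T * T).IsHermitian := by
    simp only [IsHermitian, conjTranspose_sub, conjTranspose_mul, hSh.eq, hTh.eq]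
  have hsign : (E * (S * S - T * T)).trace = ((S + T) * CFC.abs (S - T)).trace := by
    refine mul_left_cancel₀ (two_ne_zero (α := 𝕜)) ?_
    calc 2 * (E * (S * S - T * T)).trace
        = (E * ((S + T) * (S - T))).trace + (E * (S - T) * (S + T)).trace := by
          rw [two_mul, ← Matrix.trace_add, ← Matrix.trace_add]
          congr 1
          noncomm_ring
      _ = ((S + T) * ((S - T) * E)).trace + ((S + T) * (E * (S - T))).trace := by
          rw [Matrix.trace_mul_comm E, Matrix.trace_mul_comm (E * (S - T)), Matrix.mul_assoc]
      _ = 2 * ((S + T) * CFC.abs (S - T)).trace := by rw [hEm, hmE, two_mul]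
  have hpos : 0 ≤ ((S + T) * CFC.abs (S - T)).trace - ((S - T) * (S - T)).trace := by
    have hparts : (S + T) * CFC.abs (S - T) - (S - T) * (S - T)
        = 2 • (T * (S - T)⁺ + S * (S - T)⁻) := by
      have habs := CFC.posPart_add_negPart (S - T) hD
      have hsub := CFC.posPart_sub_negPart (S - T) hD
      conv_lhs => rw [← habs]; enter [2, 2]; rw [← hsub]
      noncomm_ring
    rw [← Matrix.trace_sub, hparts, Matrix.trace_smul, Matrix.trace_add]
    exact nsmul_nonneg (add_nonneg (trace_mul_nonneg hT (CFC.posPart_nonneg _))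
      (trace_mul_nonneg hS (CFC.negPart_nonneg _))) 2
  calc ((S - T) * (S - T)).trace
      ≤ ((S + T) * CFC.abs (S - T)).trace := sub_nonneg.1 hpos
    _ = (E * (S * S - T * T)).trace := hsign.symm
    _ ≤ (CFC.abs (S * S - T * T)).trace := trace_mul_le_trace_abs hherm hE hE'

lemma exists_pseudoinverse {S : Matrix ι ι 𝕜} (hS : S.IsHermitian) :
    ∃ T : Matrix ι ι 𝕜, T.IsHermitian ∧ T * S = S * T ∧ S * T * S = S ∧ T * S * T = T := by
  have hcont (f : ℝ → ℝ) : ContinuousOn f (spectrum ℝ S) := S.finite_real_spectrum.continuousOn f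
  have hleft : cfc (fun x : ℝ => x⁻¹) S * S = cfc (fun x : ℝ => x⁻¹ * x) S := by
    rw [cfc_mul _ _ S (hcont _) (hcont _), cfc_id' ℝ S]
  have hright : S * cfc (fun x : ℝ => x⁻¹) S = cfc (fun x : ℝ => x * x⁻¹) S := by
    rw [cfc_mul _ _ S (hcont _) (hcont _), cfc_id' ℝ S]
  refine ⟨cfc (fun x : ℝ => x⁻¹) S, cfc_predicate (fun x : ℝ => x⁻¹) S, ?_, ?_, ?_⟩
  · simp only [hleft, hright, mul_comm]
  · nth_rw 3 [← cfc_id' ℝ S]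
    rw [hright, ← cfc_mul _ _ S (hcont _) (hcont _)]
    simp only [mul_inv_mul_cancel, cfc_id' ℝ S]
  · rw [hleft, ← cfc_mul _ _ S (hcont _) (hcont _)]
    exact cfc_congr fun x _ => by simpa using mul_inv_mul_cancel x⁻¹

lemma exists_mul_conjTranspose_eq_sqrt [DecidableEq κ] (M : Matrix ι κ 𝕜) :
    ∃ X : Matrix ι κ 𝕜, M * Xᴴ = CFC.sqrt (M * Mᴴ) ∧ Xᴴ * X ≤ 1 := by
  set S := CFC.sqrt (M * Mᴴ)
  have hSS : S * S = M * Mᴴ :=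
    CFC.sqrt_mul_sqrt_self _ (posSemidef_self_mul_conjTranspose M).nonneg
  have hSh : S.IsHermitian := (CFC.sqrt_nonneg _).posSemidef.1
  obtain ⟨T, hT, hcomm, hSTS, hTST⟩ := exists_pseudoinverse hSh
  have hidem : T * T * (M * Mᴴ) * (T * T) = T * T := by
    calc T * T * (M * Mᴴ) * (T * T)
        = T * (T * S * (S * T)) * T := by rw [← hSS]; simp only [Matrix.mul_assoc]
      _ = T * (T * S * T) * S * T := by rw [← hcomm]; simp only [Matrix.mul_assoc]
      _ = T * T * S * T := by rw [hTST]
      _ = T * (T * S * T) := by simp only [Matrix.mul_assoc]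
      _ = T * T := by rw [hTST]
  have hproj : IsStarProjection ((T * M)ᴴ * (T * M)) := by
    refine ⟨?_, isHermitian_conjTranspose_mul_self _⟩
    calc (T * M)ᴴ * (T * M) * ((T * M)ᴴ * (T * M))
        = Mᴴ * (T * T * (M * Mᴴ) * (T * T)) * M := by
          simp only [conjTranspose_mul, hT.eq, Matrix.mul_assoc]
      _ = (T * M)ᴴ * (T * M) := by
          rw [hidem, conjTranspose_mul, hT.eq]; simp only [Matrix.mul_assoc]
  refine ⟨T * M, ?_, sub_nonneg.1 hproj.one_sub.nonneg⟩
  rw [conjTranspose_mul, hT.eq, ← Matrix.mul_assoc, ← hSS, Matrix.mul_assoc, ← hcomm,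
    ← Matrix.mul_assoc, hSTS]

lemma sqrt_apply_eq_zero {γ : Type*} {h : ι → γ} {A : Matrix ι ι 𝕜}
    (hA : ∀ i j, h i ≠ h j → A i j = 0) {i j : ι} (hij : h i ≠ h j) : CFC.sqrt A i j = 0 := by
  set D : Matrix ι ι 𝕜 := diagonal fun k => if h k = h i then 1 else 0
  have hcomm : Commute A D := by
    ext k l
    simp only [D, mul_diagonal, diagonal_mul]
    by_cases hkl : h k = h l
    · rw [hkl, mul_comm]
    · rw [hA k l hkl, zero_mul, mul_zero]
  have hsqrt := congr_fun₂ (hcomm.cfcₙ_nnreal NNReal.sqrt).eq i j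
  simpa [CFC.sqrt, D, mul_diagonal, diagonal_mul, hij.symm] using hsqrt.symm

variable [DecidableEq ι]

lemma psdSqrt_eq_cfcSqrt {M : Matrix ι ι ℂ} (hM : M.PosSemidef) : psdSqrt M = CFC.sqrt M := by
  rw [psdSqrt, dif_pos hM, CFC.sqrt_eq_real_sqrt M hM.nonneg, cfcₙ_eq_cfc, hM.1.cfc_eq]
  rfl

lemma traceNorm_eq_re_trace_abs (M : Matrix ι ι ℂ) : traceNorm M = (CFC.abs M).trace.re := by
  rw [traceNorm, psdSqrt_eq_cfcSqrt (posSemidef_conjTranspose_mul_self M), CFC.abs,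
    star_eq_conjTranspose]

lemma traceNorm_smul (c : ℂ) (M : Matrix ι ι ℂ) : traceNorm (c • M) = ‖c‖ * traceNorm M := by
  rw [traceNorm_eq_re_trace_abs, traceNorm_eq_re_trace_abs, CFC.abs_smul, Matrix.trace_smul,
    Complex.smul_re, smul_eq_mul]

lemma traceNorm_unitary_conj {U : Matrix ι ι ℂ} (hU : Uᴴ * U = 1) (M : Matrix ι ι ℂ) :
    traceNorm (U * M * Uᴴ) = traceNorm M := by
  have habs : CFC.abs (U * M * Uᴴ) = U * CFC.abs M * Uᴴ := by
    refine CFC.sqrt_unique ?_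
      ((CFC.abs_nonneg M).posSemidef.mul_mul_conjTranspose_same U).nonneg
    calc U * CFC.abs M * Uᴴ * (U * CFC.abs M * Uᴴ)
        = U * (CFC.abs M * (Uᴴ * U) * CFC.abs M) * Uᴴ := by simp only [Matrix.mul_assoc]
      _ = U * (star M * M) * Uᴴ := by rw [hU, Matrix.mul_one, CFC.abs_mul_abs]
      _ = U * (star M * (Uᴴ * U) * M) * Uᴴ := by rw [hU, Matrix.mul_one]
      _ = star (U * M * Uᴴ) * (U * M * Uᴴ) := by
        simp only [star_eq_conjTranspose, conjTranspose_mul, conjTranspose_conjTranspose,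
          Matrix.mul_assoc]
  rw [traceNorm_eq_re_trace_abs, traceNorm_eq_re_trace_abs, habs, Matrix.mul_assoc,
    Matrix.trace_mul_comm, Matrix.mul_assoc, hU, Matrix.mul_one]

lemma traceNorm_one_kronecker [DecidableEq κ] (M : Matrix ι ι ℂ) :
    traceNorm ((1 : Matrix κ κ ℂ) ⊗ₖ M) = Fintype.card κ * traceNorm M := by
  have habs : CFC.abs ((1 : Matrix κ κ ℂ) ⊗ₖ M) = 1 ⊗ₖ CFC.abs M := by
    refine CFC.sqrt_unique ?_ (PosSemidef.one.kronecker (CFC.abs_nonneg M).posSemidef).nonneg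
    rw [← mul_kronecker_mul, CFC.abs_mul_abs, star_eq_conjTranspose, star_eq_conjTranspose,
      conjTranspose_kronecker, ← mul_kronecker_mul, conjTranspose_one]
  rw [traceNorm_eq_re_trace_abs, traceNorm_eq_re_trace_abs, habs, trace_kronecker, trace_one]
  simp

end TraceInequalities

section ParityCharacter

/-- The sign character `a ↦ (-1) ^ a` of `ZMod 2`. -/
def paritySign : AddChar (ZMod 2) ℂ := AddChar.zmodChar 2 (ζ := -1) (by norm_num)

lemma paritySign_one : paritySign 1 = -1 := by
  rw [paritySign, AddChar.zmodChar_apply, ZMod.val_one, pow_one]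

lemma conj_paritySign (a : ZMod 2) : (starRingEnd ℂ) (paritySign a) = paritySign a := by
  rw [paritySign, AddChar.zmodChar_apply, map_pow, map_neg, map_one]

lemma paritySign_mul_self (a : ZMod 2) : paritySign a * paritySign a = 1 := by
  rw [← AddChar.map_add_eq_mul, CharTwo.add_self_eq_zero, AddChar.map_zero_eq_one]

variable {n ℓ : ℕ}

lemma xVecV_eq (x z : Fin n → ZMod 2) :
    xVecV n x z = paritySign (x ⬝ᵥ z) / (Real.sqrt (2 ^ n) : ℂ) := rfl

lemma conj_xVecV (x z : Fin n → ZMod 2) : (starRingEnd ℂ) (xVecV n x z) = xVecV n x z := by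
  rw [xVecV_eq, map_div₀, conj_paritySign, Complex.conj_ofReal]

lemma xVecV_mul_xVecV (x z z' : Fin n → ZMod 2) :
    xVecV n x z * xVecV n x z' = ((2 : ℂ) ^ n)⁻¹ * paritySign (x ⬝ᵥ (z + z')) := by
  have hsqrt : (Real.sqrt (2 ^ n) : ℂ) * (Real.sqrt (2 ^ n) : ℂ) = 2 ^ n := by
    rw [← Complex.ofReal_mul, Real.mul_self_sqrt (by positivity)]
    push_cast
    rfl
  rw [xVecV_eq, xVecV_eq, dotProduct_add, AddChar.map_add_eq_mul, div_mul_div_comm, hsqrt,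
    div_eq_inv_mul]

lemma dotProduct_adjLin (g : (Fin n → ZMod 2) →ₗ[ZMod 2] (Fin ℓ → ZMod 2))
    (x : Fin n → ZMod 2) (c : Fin ℓ → ZMod 2) : x ⬝ᵥ adjLin g c = g x ⬝ᵥ c := by
  rw [adjLin, Matrix.toLin'_apply, Matrix.dotProduct_mulVec, Matrix.vecMul_transpose,
    ← Matrix.toLin'_apply, Matrix.toLin'_toMatrix']

lemma mem_range_adjLin_iff (g : (Fin n → ZMod 2) →ₗ[ZMod 2] (Fin ℓ → ZMod 2))
    (w : Fin n → ZMod 2) :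
    w ∈ LinearMap.range (adjLin g) ↔ ∀ x ∈ LinearMap.ker g, x ⬝ᵥ w = 0 := by
  constructor
  · rintro ⟨c, rfl⟩ x hx
    rw [dotProduct_adjLin, LinearMap.mem_ker.1 hx, zero_dotProduct]
  · intro hw
    have hmem : dotProductEquiv (ZMod 2) (Fin n) w ∈ LinearMap.range g.dualMap := by
      rw [LinearMap.range_dualMap_eq_dualAnnihilator_ker, Submodule.mem_dualAnnihilator]
      intro x hx
      rw [dotProductEquiv_apply_apply, dotProduct_comm, hw x hx]
    obtain ⟨η, hη⟩ := hmem
    obtain ⟨c, rfl⟩ := (dotProductEquiv (ZMod 2) (Fin ℓ)).surjective η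
    refine ⟨c, dotProduct_eq _ _ fun x => ?_⟩
    have hx := LinearMap.congr_fun hη x
    rw [LinearMap.dualMap_apply, dotProductEquiv_apply_apply, dotProductEquiv_apply_apply] at hx
    rw [dotProduct_comm, dotProduct_adjLin, dotProduct_comm, hx]

lemma card_fiber_mul_card {G H : Type*} [AddGroup G] [AddGroup H] [Fintype G] [Fintype H]
    [DecidableEq H] {g : G →+ H} (hg : Function.Surjective g) (k : H) :
    #{x | g x = k} * Fintype.card H = Fintype.card G := by
  have hfiber (k' : H) : #{x | g x = k'} = #{x | g x = k} :=
    AddMonoidHom.card_fiber_eq_of_mem_range g (hg k') (hg k)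
  have hsum : #(univ : Finset G) = ∑ k' : H, #{x | g x = k'} :=
    Finset.card_eq_sum_card_fiberwise fun x _ => mem_univ (g x)
  rw [← Finset.card_univ (α := G), hsum, Finset.sum_congr rfl fun k' _ => hfiber k',
    Finset.sum_const, Finset.card_univ, smul_eq_mul, mul_comm]

lemma sum_fiber_paritySign_eq_zero {g : (Fin n → ZMod 2) →ₗ[ZMod 2] (Fin ℓ → ZMod 2)}
    {w : Fin n → ZMod 2} (hw : w ∉ LinearMap.range (adjLin g)) (k : Fin ℓ → ZMod 2) :
    ∑ x with g x = k, paritySign (x ⬝ᵥ w) = 0 := by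
  obtain ⟨u, hu, huw⟩ : ∃ u ∈ LinearMap.ker g, u ⬝ᵥ w = 1 := by
    rw [mem_range_adjLin_iff] at hw
    push Not at hw
    obtain ⟨u, hu, huw⟩ := hw
    exact ⟨u, hu, Fin.eq_one_of_ne_zero _ huw⟩
  refine self_eq_neg.1 ?_
  rw [← Finset.sum_neg_distrib]
  refine Finset.sum_equiv (Equiv.addRight u) (fun x => ?_) (fun x _ => ?_)
  · simp [LinearMap.mem_ker.1 hu]
  · rw [Equiv.coe_addRight, add_dotProduct, huw, AddChar.map_add_eq_mul, paritySign_one, mul_neg,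
      mul_one, neg_neg]

lemma sum_fiber_paritySign {g : (Fin n → ZMod 2) →ₗ[ZMod 2] (Fin ℓ → ZMod 2)}
    (hg : Function.Surjective g) (y w : Fin n → ZMod 2) :
    ((2 : ℂ) ^ n)⁻¹ * ∑ x with g x = g y, paritySign (x ⬝ᵥ w)
      = if w ∈ LinearMap.range (adjLin g) then ((2 : ℂ) ^ ℓ)⁻¹ * paritySign (y ⬝ᵥ w) else 0 := by
  split_ifs with hw
  · obtain ⟨c, rfl⟩ := hw
    have hconst : ∀ x ∈ ({x | g x = g y} : Finset (Fin n → ZMod 2)),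
        paritySign (x ⬝ᵥ adjLin g c) = paritySign (y ⬝ᵥ adjLin g c) := fun x hx => by
      rw [dotProduct_adjLin, dotProduct_adjLin, (Finset.mem_filter.1 hx).2]
    have hcard : (#{x | g x = g y} : ℂ) * 2 ^ ℓ = 2 ^ n := by
      have h : #{x | g x = g y} * Fintype.card (Fin ℓ → ZMod 2) = Fintype.card (Fin n → ZMod 2) :=
        card_fiber_mul_card (g := g.toAddMonoidHom) hg (g y)
      rw [Fintype.card_fun, Fintype.card_fun, ZMod.card, Fintype.card_fin, Fintype.card_fin] at h
      exact_mod_cast h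
    have hne : (#{x | g x = g y} : ℂ) ≠ 0 := left_ne_zero_of_mul (hcard ▸ pow_ne_zero n two_ne_zero)
    rw [Finset.sum_congr rfl hconst, Finset.sum_const, nsmul_eq_mul, ← mul_assoc, ← hcard,
      _root_.mul_inv_rev, inv_mul_cancel_right₀ hne]
  · rw [sum_fiber_paritySign_eq_zero hw, mul_zero]

end ParityCharacter

section Recovery

open scoped MatrixOrder

variable {ι α β γ : Type*} [DecidableEq γ]

/-- The pinching of `A` along the labelling `f` of the indices: the entries whose row and column
have different labels are replaced by zero. -/
def pinch {R : Type*} [Zero R] (f : ι → γ) (A : Matrix ι ι R) : Matrix ι ι R :=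
  Matrix.of fun i j => if f i = f j then A i j else 0

/-- The matrix `m` with the label of each row copied into an additional column register; it turns
the pinching of `m * mᴴ` into a Gram matrix. -/
def labelMatrix (f : ι → γ) (m : Matrix ι β ℂ) : Matrix ι (β × γ) ℂ :=
  Matrix.of fun i j => if f i = j.2 then m i j.1 else 0

lemma labelMatrix_mul_conjTranspose [Fintype β] [Fintype γ] (f : ι → γ) (m n : Matrix ι β ℂ) :
    labelMatrix f m * (labelMatrix f n)ᴴ = pinch f (m * nᴴ) := by
  ext i j
  simp only [Matrix.mul_apply, Fintype.sum_prod_type, labelMatrix, pinch, of_apply,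
    conjTranspose_apply, ite_mul, zero_mul, Finset.sum_ite_eq, Finset.mem_univ, if_true,
    eq_comm (a := f j)]
  split_ifs <;> simp

lemma posSemidef_pinch [Finite ι] [Fintype β] [Finite γ] (f : ι → γ) (m : Matrix ι β ℂ) :
    (pinch f (m * mᴴ)).PosSemidef := by
  cases nonempty_fintype γ
  rw [← labelMatrix_mul_conjTranspose]
  exact posSemidef_self_mul_conjTranspose _

lemma trace_pinch {R : Type*} [AddCommMonoid R] [Fintype ι] (f : ι → γ) (A : Matrix ι ι R) :
    (pinch f A).trace = A.trace := by
  simp only [Matrix.trace, Matrix.diag_apply, pinch, of_apply, if_true]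

lemma exists_le_sum_eq {M : Type*} [AddCommGroup M] [PartialOrder M] [IsOrderedAddMonoid M]
    [Fintype α] [Nonempty α] {P : α → M} {a : M} (hP : ∑ z, P z ≤ a) :
    ∃ Q : α → M, P ≤ Q ∧ ∑ z, Q z = a := by
  obtain ⟨z₀⟩ := ‹Nonempty α›
  refine ⟨P + Pi.single z₀ (a - ∑ z, P z), ?_, ?_⟩
  · exact le_add_of_nonneg_right (Pi.single_nonneg.2 (sub_nonneg.2 hP))
  · simp only [Pi.add_apply, Finset.sum_add_distrib, Finset.sum_pi_single', Finset.mem_univ,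
      if_true, add_sub_cancel]

lemma dotProduct_mul_conjTranspose_mulVec [Fintype ι] [Fintype β] (Y : Matrix β ι ℂ) (v : β → ℂ) :
    star v ⬝ᵥ ((Y * Yᴴ) *ᵥ v) = ((∑ j, ‖(Yᴴ *ᵥ v) j‖ ^ 2 : ℝ) : ℂ) := by
  rw [← mulVec_mulVec, dotProduct_mulVec, ← conjTranspose_conjTranspose Y, ← star_mulVec,
    conjTranspose_conjTranspose, Complex.ofReal_sum]
  refine Finset.sum_congr rfl fun j _ => ?_
  rw [Pi.star_apply, Complex.star_def, Complex.conj_mul', Complex.ofReal_pow]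

variable [DecidableEq α]

lemma re_trace_sub_traceNorm_le_sum_sqrt_blocks [Fintype ι] [DecidableEq ι] {A B : Matrix ι ι ℂ}
    (hA : 0 ≤ A) (hB : 0 ≤ B) {h : ι → α} (hBh : ∀ i j, h i ≠ h j → B i j = 0) :
    A.trace.re - traceNorm (A - B)
      ≤ ∑ i, ∑ j, if h i = h j then ‖CFC.sqrt A i j‖ ^ 2 else 0 := by
  set S := CFC.sqrt A
  set T := CFC.sqrt B
  have hSS : S * S = A := CFC.sqrt_mul_sqrt_self A hA
  have hTT : T * T = B := CFC.sqrt_mul_sqrt_self B hB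
  have hS : 0 ≤ S := CFC.sqrt_nonneg A
  have hT : 0 ≤ T := CFC.sqrt_nonneg B
  have hSnorm : A.trace.re = ∑ i, ∑ j, ‖S i j‖ ^ 2 := by
    rw [← re_trace_mul_conjTranspose_self, hS.posSemidef.1.eq, hSS]
  have hSTnorm : ∑ i, ∑ j, ‖(S - T) i j‖ ^ 2 ≤ traceNorm (A - B) := by
    rw [← re_trace_mul_conjTranspose_self, (hS.posSemidef.1.sub hT.posSemidef.1).eq,
      traceNorm_eq_re_trace_abs, ← hSS, ← hTT]
    exact (Complex.le_def.1 (trace_sub_mul_sub_le_trace_abs hS hT)).1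
  have hblocks : ∑ i, ∑ j, ‖S i j‖ ^ 2 ≤ ∑ i, ∑ j, ((if h i = h j then ‖S i j‖ ^ 2 else 0)
      + ‖(S - T) i j‖ ^ 2) := by
    refine Finset.sum_le_sum fun i _ => Finset.sum_le_sum fun j _ => ?_
    split_ifs with hij
    · exact le_add_of_nonneg_right (sq_nonneg _)
    · have hTij : T i j = 0 := sqrt_apply_eq_zero hBh hij
      rw [Matrix.sub_apply, hTij, sub_zero, zero_add]
  simp only [Finset.sum_add_distrib] at hblocks
  linarith

/-- The Kraus operator for the outcome `z`, given the label `c`, of the pretty good measurement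
built from the contraction `X` in the polar decomposition of a `labelMatrix`; `h i` is the outcome
that row `i` should produce. -/
def pgmKraus (X : Matrix ι (β × γ) ℂ) (h : ι → α) (c : γ) (z : α) : Matrix β ι ℂ :=
  Matrix.of fun b j => if h j = z then X j (b, c) else 0

lemma sum_pgmKraus_mul_conjTranspose_le_one [Fintype ι] [Fintype α] [Finite β] [DecidableEq β]
    {X : Matrix ι (β × γ) ℂ} (hX : Xᴴ * X ≤ 1) (h : ι → α) (c : γ) :
    ∑ z, pgmKraus X h c z * (pgmKraus X h c z)ᴴ ≤ 1 := by
  have hgram : 1 - ∑ z, pgmKraus X h c z * (pgmKraus X h c z)ᴴ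
      = ((1 - Xᴴ * X).submatrix (·, c) (·, c))ᵀ := by
    ext b b'
    simp only [pgmKraus, Matrix.sub_apply, Matrix.sum_apply, Matrix.mul_apply, of_apply,
      conjTranspose_apply, transpose_apply, submatrix_apply]
    rw [Finset.sum_comm]
    congr 1
    · simp [one_apply, eq_comm]
    · exact Finset.sum_congr rfl fun j _ => by simp [mul_comm]
  rw [← sub_nonneg, hgram]
  exact ((sub_nonneg.2 hX).posSemidef.submatrix (·, c)).transpose.nonneg

lemma pgmKraus_conjTranspose_mulVec [Fintype β] [Fintype γ] (X : Matrix ι (β × γ) ℂ)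
    (m : Matrix ι β ℂ) (f : ι → γ) (h : ι → α) (i j : ι) :
    ((pgmKraus X h (f i) (h i))ᴴ *ᵥ m i) j
      = if h i = h j then (labelMatrix f m * Xᴴ) i j else 0 := by
  simp only [mulVec, dotProduct, conjTranspose_apply, pgmKraus, of_apply, Matrix.mul_apply,
    Fintype.sum_prod_type, labelMatrix, ite_mul, zero_mul, Finset.sum_ite_eq, Finset.mem_univ,
    if_true, eq_comm (a := h j)]
  split_ifs <;> simp [mul_comm]

variable [Fintype ι] [Fintype α] [Nonempty α] [Fintype β] [DecidableEq β] [Finite γ]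

lemma exists_povm_sum_sqrt_blocks_le (m : Matrix ι β ℂ) (f : ι → γ) (h : ι → α) :
    ∃ Λ : γ → α → Matrix β β ℂ, (∀ c z, (Λ c z).PosSemidef) ∧ (∀ c, ∑ z, Λ c z = 1) ∧
      (∑ i, ∑ j, if h i = h j then ‖CFC.sqrt (pinch f (m * mᴴ)) i j‖ ^ 2 else 0)
        ≤ ∑ i, (star (m i) ⬝ᵥ (Λ (f i) (h i) *ᵥ m i)).re := by
  cases nonempty_fintype γ
  obtain ⟨X, hX, hX1⟩ := exists_mul_conjTranspose_eq_sqrt (labelMatrix f m)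
  rw [labelMatrix_mul_conjTranspose] at hX
  choose Λ hle hΛsum using fun c =>
    exists_le_sum_eq (sum_pgmKraus_mul_conjTranspose_le_one hX1 h c)
  refine ⟨Λ, fun c z => ?_, hΛsum, Finset.sum_le_sum fun i _ => ?_⟩
  · exact ((posSemidef_self_mul_conjTranspose _).nonneg.trans (hle c z)).posSemidef
  set K := pgmKraus X h (f i) (h i)
  have hrow : ∑ j, (if h i = h j then ‖CFC.sqrt (pinch f (m * mᴴ)) i j‖ ^ 2 else 0)
      = (star (m i) ⬝ᵥ ((K * Kᴴ) *ᵥ m i)).re := by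
    rw [dotProduct_mul_conjTranspose_mulVec, Complex.ofReal_re]
    refine Finset.sum_congr rfl fun j _ => ?_
    rw [pgmKraus_conjTranspose_mulVec, hX]
    split_ifs <;> simp
  rw [hrow, ← sub_nonneg, ← Complex.sub_re, ← dotProduct_sub, ← sub_mulVec]
  exact (sub_nonneg.2 (hle (f i) (h i))).posSemidef.re_dotProduct_nonneg (m i)

lemma exists_povm_sub_traceNorm_le [DecidableEq ι] (m : Matrix ι β ℂ) (f : ι → γ) (h : ι → α) :
    ∃ Λ : γ → α → Matrix β β ℂ, (∀ c z, (Λ c z).PosSemidef) ∧ (∀ c, ∑ z, Λ c z = 1) ∧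
      ∑ i, ∑ b, ‖m i b‖ ^ 2 - traceNorm (pinch f (m * mᴴ) - pinch h (m * mᴴ))
        ≤ ∑ i, (star (m i) ⬝ᵥ (Λ (f i) (h i) *ᵥ m i)).re := by
  obtain ⟨Λ, hΛ, hΛsum, hle⟩ := exists_povm_sum_sqrt_blocks_le m f h
  refine ⟨Λ, hΛ, hΛsum, le_trans ?_ hle⟩
  have hblocks := re_trace_sub_traceNorm_le_sum_sqrt_blocks (h := h)
    (posSemidef_pinch f m).nonneg (posSemidef_pinch h m).nonneg
    fun i j hij => by simp only [pinch, of_apply, if_neg hij]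
  rwa [trace_pinch, re_trace_mul_conjTranspose_self] at hblocks

end Recovery

section HashedKey

open scoped Kronecker

variable {n ℓ : ℕ} {α β r : Type*}

/-- The amplitudes of a state `ψ` on `A ⊗ B ⊗ R` whose `A`-register is determined as `h i` by the
basis state `i` of `R`: rows are indexed by `R` and columns by `B`. -/
def amplitudeMatrix (h : r → α) (ψ : α × β × r → ℂ) : Matrix r β ℂ :=
  Matrix.of fun i b => ψ (h i, b, i)

lemma apply_eq_ite_amplitudeMatrix [DecidableEq α] {h : r → α} {ψ : α × β × r → ℂ}
    (hψ : ∀ z b i, h i ≠ z → ψ (z, b, i) = 0) (z : α) (b : β) (i : r) :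
    ψ (z, b, i) = if h i = z then amplitudeMatrix h ψ i b else 0 := by
  split_ifs with hz
  · rw [← hz]
    rfl
  · exact hψ z b i hz

variable [Fintype β] [Fintype r]

lemma sum_norm_sq_eq_sum_amplitudeMatrix [Fintype α] {h : r → α} {ψ : α × β × r → ℂ}
    (hψ : ∀ z b i, h i ≠ z → ψ (z, b, i) = 0) :
    ∑ x, ‖ψ x‖ ^ 2 = ∑ i, ∑ b, ‖amplitudeMatrix h ψ i b‖ ^ 2 := by
  simp only [Fintype.sum_prod_type_right]
  refine Finset.sum_congr rfl fun i _ => Finset.sum_congr rfl fun b _ => ?_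
  refine Finset.sum_eq_single (h i) (fun z _ hz => ?_) (by simp)
  rw [hψ z b i hz.symm, norm_zero, sq, mul_zero]

lemma reducedR_eq_pinch [Fintype α] [DecidableEq α] {h : r → α} {ψ : α × β × r → ℂ}
    (hψ : ∀ z b i, h i ≠ z → ψ (z, b, i) = 0) :
    reducedR ψ = pinch h (amplitudeMatrix h ψ * (amplitudeMatrix h ψ)ᴴ) := by
  ext i j
  simp only [reducedR, of_apply, apply_eq_ite_amplitudeMatrix hψ, pinch, Matrix.mul_apply,
    conjTranspose_apply]
  rw [Finset.sum_eq_single (h i) (fun z _ hz => by simp [hz.symm]) (by simp)]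
  by_cases hij : h i = h j
  · simp [hij]
  · simp [hij, Ne.symm hij]

/-- The unitary on `K ⊗ R` flipping the sign of `|k⟩ ⊗ |i⟩` according to the inner product of the
preimage `y k` of the key `k` with the value `h i` of the `Z`-register. -/
def phaseFlip {κ s : Type*} [DecidableEq κ] [DecidableEq s] (y : κ → Fin n → ZMod 2)
    (h : s → Fin n → ZMod 2) : Matrix (κ × s) (κ × s) ℂ :=
  diagonal fun p => paritySign (y p.1 ⬝ᵥ h p.2)

lemma phaseFlip_conjTranspose {κ s : Type*} [DecidableEq κ] [DecidableEq s]
    (y : κ → Fin n → ZMod 2) (h : s → Fin n → ZMod 2) : (phaseFlip y h)ᴴ = phaseFlip y h := by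
  rw [phaseFlip, diagonal_conjTranspose]
  exact congrArg diagonal (funext fun p => conj_paritySign (y p.1 ⬝ᵥ h p.2))

lemma phaseFlip_mul_self {κ s : Type*} [Fintype κ] [DecidableEq κ] [Fintype s] [DecidableEq s]
    (y : κ → Fin n → ZMod 2) (h : s → Fin n → ZMod 2) : phaseFlip y h * phaseFlip y h = 1 := by
  simp only [phaseFlip, diagonal_mul_diagonal, paritySign_mul_self, diagonal_one]

variable {h : r → Fin n → ZMod 2} {ψ : (Fin n → ZMod 2) × β × r → ℂ}

lemma condVecXV_eq (hψ : ∀ z b i, h i ≠ z → ψ (z, b, i) = 0) (x : Fin n → ZMod 2) (b : β)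
    (i : r) : condVecXV ψ x (b, i) = xVecV n x (h i) * amplitudeMatrix h ψ i b := by
  simp only [condVecXV, apply_eq_ite_amplitudeMatrix hψ, conj_xVecV, mul_ite, mul_zero,
    Finset.sum_ite_eq, Finset.mem_univ, if_true]

lemma thetaRV_apply (hψ : ∀ z b i, h i ≠ z → ψ (z, b, i) = 0) (x : Fin n → ZMod 2) (i j : r) :
    thetaRV ψ x i j = ((2 : ℂ) ^ n)⁻¹ * paritySign (x ⬝ᵥ (h i + h j))
      * (amplitudeMatrix h ψ * (amplitudeMatrix h ψ)ᴴ) i j := by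
  rw [← xVecV_mul_xVecV, Matrix.mul_apply, Finset.mul_sum]
  simp only [thetaRV, of_apply, condVecXV_eq hψ, map_mul, conj_xVecV, conjTranspose_apply,
    Complex.star_def]
  exact Finset.sum_congr rfl fun b _ => by ring

variable {W : Type*} [AddCommGroup W] [Module (ZMod 2) W] [DecidableEq W]
  {g : (Fin n → ZMod 2) →ₗ[ZMod 2] (Fin ℓ → ZMod 2)} {f : (Fin n → ZMod 2) →ₗ[ZMod 2] W}

lemma sum_thetaRV_fiber (hψ : ∀ z b i, h i ≠ z → ψ (z, b, i) = 0) (hg : Function.Surjective g)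
    (hker : LinearMap.ker f = LinearMap.range (adjLin g)) (y : Fin n → ZMod 2) (i j : r) :
    ∑ x with g x = g y, thetaRV ψ x i j = ((2 : ℂ) ^ ℓ)⁻¹ * (paritySign (y ⬝ᵥ (h i + h j))
      * pinch (f ∘ h) (amplitudeMatrix h ψ * (amplitudeMatrix h ψ)ᴴ) i j) := by
  have hmem : h i + h j ∈ LinearMap.range (adjLin g) ↔ f (h i) = f (h j) := by
    rw [← hker, LinearMap.mem_ker, map_add, add_eq_zero_iff_eq_neg, ZModModule.neg_eq_self]
  simp only [thetaRV_apply hψ, ← Finset.sum_mul, ← Finset.mul_sum, sum_fiber_paritySign hg, hmem,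
    pinch, of_apply, Function.comp_apply]
  split_ifs <;> ring

lemma keyState_sub_idealKeyV_eq [DecidableEq r] (hψ : ∀ z b i, h i ≠ z → ψ (z, b, i) = 0)
    (hg : Function.Surjective g) (hker : LinearMap.ker f = LinearMap.range (adjLin g))
    {y : (Fin ℓ → ZMod 2) → Fin n → ZMod 2} (hy : Function.RightInverse y g) :
    keyState ψ g - idealKeyV ℓ ψ = ((2 : ℂ) ^ ℓ)⁻¹ • (phaseFlip y h
      * (1 ⊗ₖ (pinch (f ∘ h) (amplitudeMatrix h ψ * (amplitudeMatrix h ψ)ᴴ)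
        - pinch h (amplitudeMatrix h ψ * (amplitudeMatrix h ψ)ᴴ))) * (phaseFlip y h)ᴴ) := by
  ext ⟨k, i⟩ ⟨k', j⟩
  rw [phaseFlip_conjTranspose]
  simp only [Matrix.sub_apply, Matrix.smul_apply, keyState, idealKeyV, phaseFlip, of_apply,
    smul_eq_mul, mul_diagonal, diagonal_mul, kronecker_apply, one_apply, reducedR_eq_pinch hψ]
  by_cases hk : k = k'
  · subst hk
    have hfiber := sum_thetaRV_fiber hψ hg hker (y k) i j
    rw [hy k] at hfiber
    have hinv : paritySign (y k ⬝ᵥ h i) * pinch h (amplitudeMatrix h ψ * (amplitudeMatrix h ψ)ᴴ) i j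
        * paritySign (y k ⬝ᵥ h j) = pinch h (amplitudeMatrix h ψ * (amplitudeMatrix h ψ)ᴴ) i j := by
      by_cases hij : h i = h j
      · rw [hij, mul_right_comm, paritySign_mul_self, one_mul]
      · simp only [pinch, of_apply, if_neg hij, mul_zero, zero_mul]
    simp only [if_true, hfiber, dotProduct_add, AddChar.map_add_eq_mul]
    linear_combination ((2 : ℂ) ^ ℓ)⁻¹ * hinv
  · simp [hk]

lemma traceDist_keyState_idealKeyV [DecidableEq r] (hψ : ∀ z b i, h i ≠ z → ψ (z, b, i) = 0)
    (hg : Function.Surjective g) (hker : LinearMap.ker f = LinearMap.range (adjLin g)) :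
    traceDist (keyState ψ g) (idealKeyV ℓ ψ)
      = traceDist (pinch (f ∘ h) (amplitudeMatrix h ψ * (amplitudeMatrix h ψ)ᴴ))
        (pinch h (amplitudeMatrix h ψ * (amplitudeMatrix h ψ)ᴴ)) := by
  obtain ⟨y, hy⟩ := hg.hasRightInverse
  have hunitary : (phaseFlip y h)ᴴ * phaseFlip y h = 1 := by
    rw [phaseFlip_conjTranspose, phaseFlip_mul_self]
  rw [traceDist, traceDist, keyState_sub_idealKeyV_eq hψ hg hker hy, traceNorm_smul,
    traceNorm_unitary_conj hunitary, traceNorm_one_kronecker]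
  simp

end HashedKey

section RecoveryProbability

variable {α β γ r : Type*} [Fintype α] [Fintype β] [Fintype r]

/-- The probability that the measurement `Λ c` of `B`, with `c` the value of `f` at the `Z`-outcome
of `A`, returns that outcome. -/
def recoveryProb (ψ : α × β × r → ℂ) (f : α → γ) (Λ : γ → α → Matrix β β ℂ) : ℝ :=
  (∑ z, ∑ b, ∑ b', ∑ s, (starRingEnd ℂ) (ψ (z, b, s)) * Λ (f z) z b b' * ψ (z, b', s)).re

lemma recoveryProb_eq_sum_dotProduct (ψ : α × β × r → ℂ) (f : α → γ)
    (Λ : γ → α → Matrix β β ℂ) :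
    recoveryProb ψ f Λ
      = ∑ z, ∑ s, (star (fun b => ψ (z, b, s)) ⬝ᵥ (Λ (f z) z *ᵥ fun b => ψ (z, b, s))).re := by
  simp only [recoveryProb, ← Complex.re_sum, dotProduct, mulVec, Finset.mul_sum, Pi.star_apply,
    Complex.star_def, mul_assoc]
  congr 1
  refine Finset.sum_congr rfl fun z _ => ?_
  rw [Finset.sum_comm (s := (univ : Finset r))]
  exact Finset.sum_congr rfl fun b _ => Finset.sum_comm

lemma recoveryProb_nonneg (ψ : α × β × r → ℂ) (f : α → γ) {Λ : γ → α → Matrix β β ℂ}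
    (hΛ : ∀ c z, (Λ c z).PosSemidef) : 0 ≤ recoveryProb ψ f Λ := by
  rw [recoveryProb_eq_sum_dotProduct]
  exact Finset.sum_nonneg fun z _ => Finset.sum_nonneg fun s _ =>
    (hΛ (f z) z).re_dotProduct_nonneg _

lemma recoveryProb_eq_sum_amplitudeMatrix {h : r → α} {ψ : α × β × r → ℂ}
    (hψ : ∀ z b i, h i ≠ z → ψ (z, b, i) = 0) (f : α → γ) (Λ : γ → α → Matrix β β ℂ) :
    recoveryProb ψ f Λ = ∑ i, (star (amplitudeMatrix h ψ i)
      ⬝ᵥ (Λ (f (h i)) (h i) *ᵥ amplitudeMatrix h ψ i)).re := by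
  rw [recoveryProb_eq_sum_dotProduct, Finset.sum_comm]
  refine Finset.sum_congr rfl fun i _ => ?_
  refine Finset.sum_eq_single (h i) (fun z _ hz => ?_) (by simp)
  rw [show (fun b => ψ (z, b, i)) = 0 from funext fun b => hψ z b i hz.symm, mulVec_zero,
    dotProduct_zero, Complex.zero_re]

end RecoveryProbability

lemma apply_eq_zero_of_ne_fst {α β r₂ : Type*} [DecidableEq α] {a : α → ℂ} {φ : α → β × r₂ → ℂ}
    {ψ : α × β × (α × r₂) → ℂ}
    (hform : ∀ z b k s, ψ (z, b, (k, s)) = a z * (if k = z then 1 else 0) * φ z (b, s))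
    (z : α) (b : β) (i : α × r₂) (hi : i.1 ≠ z) : ψ (z, b, i) = 0 := by
  rw [hform, if_neg hi, mul_zero, zero_mul]

lemma sum_norm_sq_of_form {α β r₂ : Type*} [Fintype α] [DecidableEq α] [Fintype β] [Fintype r₂]
    {a : α → ℂ} {φ : α → β × r₂ → ℂ} (hφ : ∀ z, ∑ t, ‖φ z t‖ ^ 2 = 1)
    {ψ : α × β × (α × r₂) → ℂ}
    (hform : ∀ z b k s, ψ (z, b, (k, s)) = a z * (if k = z then 1 else 0) * φ z (b, s)) :
    ∑ x, ‖ψ x‖ ^ 2 = ∑ z, ‖a z‖ ^ 2 := by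
  rw [sum_norm_sq_eq_sum_amplitudeMatrix (apply_eq_zero_of_ne_fst hform), Fintype.sum_prod_type]
  refine Finset.sum_congr rfl fun z _ => ?_
  rw [← mul_one (‖a z‖ ^ 2), ← hφ z, Fintype.sum_prod_type_right, Finset.mul_sum]
  refine Finset.sum_congr rfl fun s _ => ?_
  rw [Finset.mul_sum]
  refine Finset.sum_congr rfl fun b _ => ?_
  rw [amplitudeMatrix, of_apply, hform, if_pos rfl, mul_one, norm_mul, mul_pow]

lemma one_sub_sqrt_le_of_le {t u : ℝ} (ht : 0 ≤ t) (hu : 0 ≤ u) (htu : 1 - t ≤ u) : 1 - √t ≤ u := by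
  rcases le_total t 1 with h | h
  · linarith [Real.le_sqrt_of_sq_le (pow_le_of_le_one ht h two_ne_zero)]
  · linarith [Real.one_le_sqrt.2 h]

theorem pa_implies_csi_caseB_general {n ℓ : ℕ} {β r W : Type*} [Fintype β] [DecidableEq β]
    [Fintype r] [DecidableEq r] [AddCommGroup W] [Module (ZMod 2) W] [Finite W]
    {h : r → Fin n → ZMod 2} {ψ : (Fin n → ZMod 2) × β × r → ℂ}
    (hψ : ∀ z b i, h i ≠ z → ψ (z, b, i) = 0)
    {g : (Fin n → ZMod 2) →ₗ[ZMod 2] (Fin ℓ → ZMod 2)} (hg : Function.Surjective g)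
    {f : (Fin n → ZMod 2) →ₗ[ZMod 2] W} (hker : LinearMap.ker f = LinearMap.range (adjLin g)) :
    ∃ Λ : W → (Fin n → ZMod 2) → Matrix β β ℂ,
      (∀ c z, (Λ c z).PosSemidef) ∧ (∀ c, ∑ z, Λ c z = 1) ∧
      ∑ x, ‖ψ x‖ ^ 2 - 2 * traceDist (keyState ψ g) (idealKeyV ℓ ψ) ≤ recoveryProb ψ f Λ := by
  obtain ⟨Λ, hΛ, hΛsum, hle⟩ := exists_povm_sub_traceNorm_le (amplitudeMatrix h ψ) (f ∘ h) h
  refine ⟨Λ, hΛ, hΛsum, ?_⟩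
  rwa [recoveryProb_eq_sum_amplitudeMatrix hψ, sum_norm_sq_eq_sum_amplitudeMatrix hψ,
    traceDist_keyState_idealKeyV hψ hg hker, traceDist, mul_div_cancel₀ _ two_ne_zero]

/-- For a state with H(Z^A|R) = 0 (form ∑_z √p_z |z⟩_A ⊗ |φ_z⟩_{BR₂} ⊗ |z⟩_{R₁},
suitably reordered), if the hashed X-key from a surjective linear extractor g to ℓ bits is
ε-secure against R = R₁R₂, then every surjective linear f⊥ to n−ℓ bits with
ker f⊥ = range gᵀ is a compressor from which, together with B, the Z-outcome is
√(2ε)-recoverable. -/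
theorem pa_implies_csi_caseB {n ℓ : ℕ} (hn : 1 ≤ n) (hℓ : ℓ ≤ n)
    {β r₂ : Type*} [Fintype β] [DecidableEq β] [Fintype r₂] [DecidableEq r₂]
    (p : (Fin n → ZMod 2) → ℝ) (hp0 : ∀ z, 0 ≤ p z) (hp1 : ∑ z, p z = 1)
    (φ : (Fin n → ZMod 2) → β × r₂ → ℂ) (hφ : ∀ z, ∑ t, ‖φ z t‖ ^ 2 = 1)
    (ψ : (Fin n → ZMod 2) × β × ((Fin n → ZMod 2) × r₂) → ℂ)
    (hform : ∀ a b k s, ψ (a, b, (k, s))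
        = (Real.sqrt (p a) : ℂ) * (if k = a then 1 else 0) * φ a (b, s))
    (g : ((Fin n → ZMod 2)) →ₗ[ZMod 2] (Fin ℓ → ZMod 2)) (hg : Function.Surjective g)
    (ε : ℝ) (hε0 : 0 ≤ ε) (hε1 : ε ≤ 1)
    (hsec : traceDist (keyState ψ g) (idealKeyV ℓ ψ) ≤ ε) :
    ∀ fp : ((Fin n → ZMod 2)) →ₗ[ZMod 2] (Fin (n - ℓ) → ZMod 2),
      Function.Surjective fp → LinearMap.ker fp = LinearMap.range (adjLin g) →
      ∃ Λ : (Fin (n - ℓ) → ZMod 2) → (Fin n → ZMod 2) → Matrix β β ℂ,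
        (∀ c z, (Λ c z).PosSemidef) ∧ (∀ c, ∑ z, Λ c z = 1) ∧
        1 - Real.sqrt (2 * ε) ≤ (∑ z, ∑ b, ∑ b', ∑ s,
          (starRingEnd ℂ) (ψ (z, b, s)) * Λ (fp z) z b b' * ψ (z, b', s)).re := by
  intro fp _ hker
  obtain ⟨Λ, hΛ, hΛsum, hrec⟩ :=
    pa_implies_csi_caseB_general (apply_eq_zero_of_ne_fst hform) hg hker
  have hnorm : ∑ x, ‖ψ x‖ ^ 2 = 1 := by
    rw [sum_norm_sq_of_form hφ hform, ← hp1]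
    simp [hp0]
  refine ⟨Λ, hΛ, hΛsum, one_sub_sqrt_le_of_le (by positivity) (recoveryProb_nonneg ψ fp hΛ) ?_⟩
  exact le_trans (by linarith) hrec
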